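/- arXiv:1406.3049 — 7 statements merged into one kernel-verified Lean document; each statement's English description precedes it below -/
import Mathlib

section
/- Let V be a real inner product space, k ≥ 4 an even integer, and let v_1, …, v_k ∈ V satisfy: ⟪v_i, v_i⟫ = 2 for all i; ⟪v_i, v_{i+1}⟫ = ε_i with ε_i ∈ {1, −1} for all i (indices cyclic modulo k); and ⟪v_i, v_j⟫ = 0 for every non-cyclically-adjacent pair i ≠ j. If v_1, …, v_k are linearly independent, then there exist indices i and j with ε_i = −1 and ε_j = +1 (i.e., the cycle contains at least one solid edge and at least one dotted edge). -/
open RealInnerProductSpace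

/-- A cycle of vectors of squared norm `2`, with non-adjacent vectors orthogonal, is linearly
dependent as soon as it can be rescaled by a nonzero `c` for which every edge balances, that is
`c (i + 1) * ⟪v i, v (i + 1)⟫ = -c i` and `c i * ⟪v i, v (i + 1)⟫ = -c (i + 1)`. -/
theorem not_linearIndependent_of_balanced_cycle
    {V : Type*} [NormedAddCommGroup V] [InnerProductSpace ℝ V]
    {k : ℕ} (hk : 3 ≤ k) [NeZero k] {v : ZMod k → V} {c : ZMod k → ℝ} (hc : c ≠ 0)
    (hdiag : ∀ i, ⟪v i, v i⟫ = (2 : ℝ))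
    (hright : ∀ i, c (i + 1) * ⟪v i, v (i + 1)⟫ = -c i)
    (hleft : ∀ i, c i * ⟪v i, v (i + 1)⟫ = -c (i + 1))
    (horth : ∀ i j : ZMod k, i ≠ j → j ≠ i + 1 → i ≠ j + 1 → ⟪v i, v j⟫ = (0 : ℝ)) :
    ¬ LinearIndependent ℝ v := by
  intro hli
  have one_ne : (1 : ZMod k) ≠ 0 := by
    have : Fact (1 < k) := ⟨by omega⟩
    exact one_ne_zero
  have two_ne : (1 : ZMod k) + 1 ≠ 0 := by
    intro h
    have h' : ((2 : ℕ) : ZMod k) = 0 := by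
      push_cast
      rw [← h]
      norm_num
    have := Nat.le_of_dvd (by norm_num) ((ZMod.natCast_eq_zero_iff 2 k).1 h')
    omega
  have term (i j : ZMod k) : c j * ⟪v i, v j⟫ =
      (if j = i then 2 * c i else 0) + (if j = i + 1 then -c i else 0)
        + (if j = i - 1 then -c i else 0) := by
    by_cases h0 : j = i
    · subst h0
      have h1 : j ≠ j + 1 := by simpa using one_ne
      have h2 : j ≠ j - 1 := fun h => one_ne (by linear_combination h)
      simp only [hdiag, if_true, if_neg h1, if_neg h2]
      ring
    by_cases h1 : j = i + 1
    · subst h1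
      have h2 : i + 1 ≠ i - 1 := fun h => two_ne (by linear_combination h)
      simp only [hright, if_true, if_neg h0, if_neg h2]
      ring
    by_cases h2 : j = i - 1
    · obtain rfl : i = j + 1 := by rw [h2]; ring
      rw [real_inner_comm, hleft]
      simp only [if_neg h0, if_neg h1, if_pos h2]
      ring
    · rw [horth i j (Ne.symm h0) h1 (fun h => h2 (by rw [h]; ring))]
      simp [h0, h1, h2]
  have orth_sum (i : ZMod k) : ⟪v i, ∑ j, c j • v j⟫ = (0 : ℝ) := by
    simp only [inner_sum, real_inner_smul_right, term, Finset.sum_add_distrib,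
      Finset.sum_ite_eq', Finset.mem_univ, if_true]
    ring
  have hsum : ∑ j, c j • v j = 0 := by
    rw [← inner_self_eq_zero (𝕜 := ℝ), sum_inner]
    simp only [real_inner_smul_left, orth_sum, mul_zero, Finset.sum_const_zero]
  exact hc (funext (Fintype.linearIndependent_iff.1 hli c hsum))

/-- An even cycle carries a function that alternates between `1` and `-1`. -/
theorem ZMod.exists_alternating_of_even {k : ℕ} (hk : Even k) :
    ∃ c : ZMod k → ℝ, c 0 = 1 ∧ ∀ i, c (i + 1) = -c i := by
  let f : ZMod k →+* ZMod 2 := ZMod.castHom hk.two_dvd (ZMod 2)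
  refine ⟨fun i => if f i = 0 then 1 else -1, by simp, fun i => ?_⟩
  have flip : ∀ x : ZMod 2, x + 1 = 0 ↔ ¬ x = 0 := by decide
  simp only [map_add, map_one, flip]
  split_ifs <;> simp_all

/-- In an even cycle of linearly independent roots, where consecutive roots have
inner product ±1 (solid edge: −1, dotted edge: +1) and non-adjacent roots are
orthogonal, there is at least one solid edge and at least one dotted edge. -/
theorem cycle_has_solid_and_dotted_edge
    {V : Type*} [NormedAddCommGroup V] [InnerProductSpace ℝ V]
    (k : ℕ) (hk : 4 ≤ k) (hkeven : Even k) [NeZero k]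
    (v : ZMod k → V) (ε : ZMod k → ℝ)
    (hε : ∀ i, ε i = 1 ∨ ε i = -1)
    (hdiag : ∀ i, ⟪v i, v i⟫ = (2 : ℝ))
    (hadj : ∀ i, ⟪v i, v (i + 1)⟫ = ε i)
    (horth : ∀ i j : ZMod k, i ≠ j → j ≠ i + 1 → i ≠ j + 1 → ⟪v i, v j⟫ = (0 : ℝ))
    (hli : LinearIndependent ℝ v) :
    (∃ i, ε i = -1) ∧ (∃ j, ε j = 1) := by
  constructor
  · by_contra! h
    have hone (i : ZMod k) : ε i = 1 := (hε i).resolve_right (h i)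
    obtain ⟨c, hc0, hc⟩ := ZMod.exists_alternating_of_even hkeven
    refine not_linearIndependent_of_balanced_cycle (c := c) (by omega) ?_ hdiag ?_ ?_ horth hli
    · rintro rfl
      simp at hc0
    all_goals
      intro i
      simp [hadj, hone, hc]
  · by_contra! h
    have hneg (i : ZMod k) : ε i = -1 := (hε i).resolve_left (h i)
    refine not_linearIndependent_of_balanced_cycle (c := 1) (by omega) one_ne_zero hdiag
      ?_ ?_ horth hli
    all_goals
      intro i
      simp [hadj, hneg]
end

section
/- Let V be a real inner product space and v_1, …, v_n ∈ V. Let G be the graph on vertex set {1, …, n} with an edge {i, j} (i ≠ j) exactly when ⟪v_i, v_j⟫ ≠ 0. If G is acyclic (a forest), then there exist signs ε_1, …, ε_n ∈ {1, −1} such that ⟪ε_i v_i, ε_j v_j⟫ ≤ 0 for all i ≠ j. -/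
open RealInnerProductSpace

/-- On a forest, every antisymmetric group-valued edge weighting is the coboundary of a
vertex labelling. -/
theorem SimpleGraph.IsAcyclic.exists_potential {α M : Type*} [Group M] {G : SimpleGraph α}
    (hG : G.IsAcyclic) (s : α → α → M) (hs : ∀ u v, s v u = (s u v)⁻¹) :
    ∃ f : α → M, ∀ u v, G.Adj u v → f v = f u * s u v := by
  let root (v : α) : α := (G.connectedComponentMk v).out
  have hroot (v : α) : ∃ p : G.Walk (root v) v, p.IsPath :=
    (SimpleGraph.ConnectedComponent.exact
      (Quot.out_eq (G.connectedComponentMk v))).exists_isPath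
  choose p hp using hroot
  let weight {u v : α} (q : G.Walk u v) : M := (q.darts.map fun d => s d.fst d.snd).prod
  have weight_path {r v : α} (hr : root v = r) (q : G.Walk r v) (hq : q.IsPath) :
      weight (p v) = weight q := by
    subst hr
    exact congrArg (fun x : G.Path (root v) v => weight x.1)
      ((hG.subsingleton_path _ _).elim ⟨p v, hp v⟩ ⟨q, hq⟩)
  have weight_concat {r u v : α} (q : G.Walk r u) (h : G.Adj u v) :
      weight (q.concat h) = weight q * s u v := by
    simp [weight, SimpleGraph.Walk.darts_concat]
  refine ⟨fun v => weight (p v), fun u v h => ?_⟩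
  have huv : root u = root v :=
    congrArg Quot.out (SimpleGraph.ConnectedComponent.sound h.reachable)
  by_cases hv : v ∈ (p u).support
  · have hq : ((p v).copy huv.symm rfl).IsPath := by simpa using hp v
    have hconcat := hG.path_concat hq (hp u) h.symm hv
    have hu : weight (p u) = weight (p v) * s v u := by
      rw [weight_path huv.symm _ hq, ← weight_concat _ h.symm, ← hconcat]
    simp [hu, hs u v]
  · beta_reduce
    rw [weight_path huv.symm _ ((hp u).concat hv h), weight_concat]

/-- If the diagram of a family of vectors (edges between non-orthogonal pairs) is a
forest, then after suitable sign changes (similarity transformations) all pairwise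
inner products can be made non-positive. -/
theorem forest_admits_nonpositive_signs
    {V : Type*} [NormedAddCommGroup V] [InnerProductSpace ℝ V]
    (n : ℕ) (v : Fin n → V)
    (hacyclic : (SimpleGraph.fromRel (fun i j : Fin n => ⟪v i, v j⟫ ≠ (0 : ℝ))).IsAcyclic) :
    ∃ ε : Fin n → ℝ, (∀ i, ε i = 1 ∨ ε i = -1) ∧
      ∀ i j : Fin n, i ≠ j → ⟪ε i • v i, ε j • v j⟫ ≤ (0 : ℝ) := by
  let s (i j : Fin n) : ℤˣ := if (0 : ℝ) < ⟪v i, v j⟫ then -1 else 1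
  obtain ⟨f, hf⟩ := hacyclic.exists_potential s fun i j => by
    simp only [s, real_inner_comm, Int.units_inv_eq_self]
  refine ⟨fun i => ((f i : ℤ) : ℝ), fun i => ?_, fun i j hij => ?_⟩
  · rcases Int.units_eq_one_or (f i) with h | h <;> simp [h]
  · rw [real_inner_smul_left, real_inner_smul_right]
    by_cases h0 : (⟪v i, v j⟫ : ℝ) = 0
    · simp [h0]
    · beta_reduce
      rw [hf i j ((SimpleGraph.fromRel_adj _ _ _).2 ⟨hij, Or.inl h0⟩)]
      by_cases hpos : (0 : ℝ) < ⟪v i, v j⟫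
      · rcases Int.units_eq_one_or (f i) with h | h <;> simp [s, h, hpos, hpos.le]
      · rcases Int.units_eq_one_or (f i) with h | h <;> simp [s, h, hpos, not_lt.mp hpos]
end

section
/- Let n ≥ 1 and k ≥ 4, and let v_1, …, v_k be elements of Φ(A_n) such that ⟪v_i, v_{i+1}⟫ ≠ 0 for all i (indices cyclic modulo k, so also ⟪v_k, v_1⟫ ≠ 0) and ⟪v_i, v_j⟫ = 0 for every non-cyclically-adjacent pair i ≠ j. Then v_1, …, v_k are linearly dependent. In other words, the root system A_n contains no set of linearly independent roots whose orthogonality diagram is a cycle of length ≥ 4. -/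
open RealInnerProductSpace

/-- A root of the root system `A_n` inside `ℝ^{n+1}`: a vector of the form `e_i - e_j`
with `i ≠ j`. -/
def IsRootAn (n : ℕ) (x : EuclideanSpace ℝ (Fin (n + 1))) : Prop :=
  ∃ i j : Fin (n + 1), i ≠ j ∧
    x = EuclideanSpace.single i (1 : ℝ) - EuclideanSpace.single j (1 : ℝ)

/-- Two vectors with nonzero inner product have a common support coordinate. -/
theorem exists_common_support_of_inner_ne_zero {ι : Type*} [Fintype ι]
    {x y : EuclideanSpace ℝ ι} (h : ⟪x, y⟫ ≠ (0 : ℝ)) : ∃ p, x p ≠ 0 ∧ y p ≠ 0 := by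
  rw [PiLp.inner_apply] at h
  obtain ⟨p, -, hp⟩ := Finset.exists_ne_zero_of_sum_ne_zero h
  refine ⟨p, ?_, ?_⟩ <;> intro h0 <;> simp [h0] at hp

theorem eq_or_eq_of_single_sub_single_apply_ne_zero {ι : Type*} [DecidableEq ι] {a b p : ι}
    (h : (EuclideanSpace.single a (1 : ℝ) - EuclideanSpace.single b (1 : ℝ) :
      EuclideanSpace ℝ ι) p ≠ 0) : p = a ∨ p = b := by
  contrapose! h
  simp [h.1, h.2]

/-- Two roots of `A_n` with a common support coordinate are not orthogonal. -/
theorem IsRootAn.inner_ne_zero {n : ℕ} {x y : EuclideanSpace ℝ (Fin (n + 1))}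
    (hx : IsRootAn n x) (hy : IsRootAn n y) {p : Fin (n + 1)} (hxp : x p ≠ 0) (hyp : y p ≠ 0) :
    ⟪x, y⟫ ≠ (0 : ℝ) := by
  obtain ⟨a, b, hab, rfl⟩ := hx
  obtain ⟨c, d, hcd, rfl⟩ := hy
  have hp := eq_or_eq_of_single_sub_single_apply_ne_zero hxp
  have hp' := eq_or_eq_of_single_sub_single_apply_ne_zero hyp
  simp only [inner_sub_left, EuclideanSpace.inner_single_left, PiLp.sub_apply,
    PiLp.single_apply, map_one, one_mul]
  clear hxp hyp
  rcases hp with rfl | rfl <;> rcases hp' with rfl | rfl <;> split_ifs <;> simp_all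
  all_goals norm_num

/-- A root of `A_n` supported at distinct `p` and `q` is `± (e_p - e_q)`. -/
theorem IsRootAn.exists_smul_eq {n : ℕ} {x : EuclideanSpace ℝ (Fin (n + 1))}
    (hx : IsRootAn n x) {p q : Fin (n + 1)} (hpq : p ≠ q) (hp : x p ≠ 0) (hq : x q ≠ 0) :
    ∃ s : ℝ, s ≠ 0 ∧
      s • x = EuclideanSpace.single p (1 : ℝ) - EuclideanSpace.single q (1 : ℝ) := by
  obtain ⟨a, b, hab, rfl⟩ := hx
  have h : (p = a ∧ q = b) ∨ (p = b ∧ q = a) := by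
    have hp := eq_or_eq_of_single_sub_single_apply_ne_zero hp
    have hq := eq_or_eq_of_single_sub_single_apply_ne_zero hq
    grind
  obtain ⟨rfl, rfl⟩ | ⟨rfl, rfl⟩ := h
  · exact ⟨1, one_ne_zero, one_smul _ _⟩
  · exact ⟨-1, by norm_num, by simp⟩

/-- The root system `A_n` contains no set of linearly independent roots whose
orthogonality diagram is a cycle of length at least 4. -/
theorem An_no_cycles_of_length_ge_four
    (n k : ℕ) (hn : 1 ≤ n) (hk : 4 ≤ k) [NeZero k]
    (v : ZMod k → EuclideanSpace ℝ (Fin (n + 1)))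
    (hroot : ∀ r, IsRootAn n (v r))
    (hadj : ∀ i, ⟪v i, v (i + 1)⟫ ≠ (0 : ℝ))
    (horth : ∀ i j : ZMod k, i ≠ j → j ≠ i + 1 → i ≠ j + 1 → ⟪v i, v j⟫ = (0 : ℝ)) :
    ¬ LinearIndependent ℝ v := by
  have hcast : ∀ m : ℕ, 0 < m → m < 4 → (m : ZMod k) ≠ 0 := fun m h0 h4 h =>
    absurd (Nat.le_of_dvd h0 ((ZMod.natCast_eq_zero_iff m k).1 h)) (by omega)
  have h1 : (1 : ZMod k) ≠ 0 := by simpa using hcast 1 (by norm_num) (by norm_num)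
  have h2 : (2 : ZMod k) ≠ 0 := by simpa using hcast 2 (by norm_num) (by norm_num)
  have h3 : (3 : ZMod k) ≠ 0 := by simpa using hcast 3 (by norm_num) (by norm_num)
  choose p hp hp' using fun i => exists_common_support_of_inner_ne_zero (hadj i)
  have hne : ∀ i, p (i + 1) ≠ p i := by
    intro i h
    refine (hroot i).inner_ne_zero (hroot (i + 1 + 1)) (hp i) (h ▸ hp' (i + 1))
      (horth _ _ (fun e => h2 ?_) (fun e => h1 ?_) (fun e => h3 ?_))
    · linear_combination -e
    · linear_combination e
    · linear_combination -e
  choose s hs hsv using fun i => (hroot (i + 1)).exists_smul_eq (hne i) (hp (i + 1)) (hp' i)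
  intro hli
  have hli' := hli.comp _ (add_left_injective (1 : ZMod k))
  refine hs 0 (Fintype.linearIndependent_iff.1 hli' s ?_ 0)
  simp only [Function.comp_apply, hsv, Finset.sum_sub_distrib, sub_eq_zero]
  exact Equiv.sum_comp (Equiv.addRight (1 : ZMod k)) fun i => EuclideanSpace.single (p i) (1 : ℝ)
end

section
/- For every n ≥ 1 there do not exist vectors β_1, …, β_7 ∈ ℝ^n, each of the form ±e_i ± e_j for some 1 ≤ i < j ≤ n, whose Gram matrix (⟪β_r, β_s⟫) equals the Cartan matrix of E_7; and there do not exist vectors β_1, …, β_8 ∈ ℝ^n, each of the form ±e_i ± e_j, whose Gram matrix equals the Cartan matrix of E_8. In other words, the root systems E_7 and E_8 are not contained in the root system D_n. -/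
open RealInnerProductSpace

/-- A root of the root system `D_n` inside `ℝ^n`: a vector of the form `±e_i ± e_j`
with `i < j`. -/
def IsRootDn (n : ℕ) (x : EuclideanSpace ℝ (Fin n)) : Prop :=
  ∃ i j : Fin n, i < j ∧
    (x = EuclideanSpace.single i (1 : ℝ) + EuclideanSpace.single j (1 : ℝ) ∨
     x = EuclideanSpace.single i (1 : ℝ) - EuclideanSpace.single j (1 : ℝ) ∨
     x = -EuclideanSpace.single i (1 : ℝ) + EuclideanSpace.single j (1 : ℝ) ∨
     x = -EuclideanSpace.single i (1 : ℝ) - EuclideanSpace.single j (1 : ℝ))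

/-- The Cartan matrix of `E₇` (Bourbaki numbering). -/
def cartanE7 : Matrix (Fin 7) (Fin 7) ℝ :=
  !![ 2,  0, -1,  0,  0,  0,  0;
      0,  2,  0, -1,  0,  0,  0;
     -1,  0,  2, -1,  0,  0,  0;
      0, -1, -1,  2, -1,  0,  0;
      0,  0,  0, -1,  2, -1,  0;
      0,  0,  0,  0, -1,  2, -1;
      0,  0,  0,  0,  0, -1,  2]

/-- The Cartan matrix of `E₈` (Bourbaki numbering). -/
def cartanE8 : Matrix (Fin 8) (Fin 8) ℝ :=
  !![ 2,  0, -1,  0,  0,  0,  0,  0;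
      0,  2,  0, -1,  0,  0,  0,  0;
     -1,  0,  2, -1,  0,  0,  0,  0;
      0, -1, -1,  2, -1,  0,  0,  0;
      0,  0,  0, -1,  2, -1,  0,  0;
      0,  0,  0,  0, -1,  2, -1,  0;
      0,  0,  0,  0,  0, -1,  2, -1;
      0,  0,  0,  0,  0,  0, -1,  2]

lemma EuclideanSpace.single_neg_one {n : ℕ} (i : Fin n) :
    EuclideanSpace.single i (-1 : ℝ) = -EuclideanSpace.single i (1 : ℝ) := by
  ext k
  by_cases h : k = i <;> simp [h]

/-- A root of `D_n` is a signed sum of two distinct basis vectors, the signs being units of `ℤ`. -/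
lemma IsRootDn.exists_eq {n : ℕ} {x : EuclideanSpace ℝ (Fin n)} (hx : IsRootDn n x) :
    ∃ (i j : Fin n) (s t : ℤˣ), i ≠ j ∧
      x = EuclideanSpace.single i ((s : ℤ) : ℝ) + EuclideanSpace.single j ((t : ℤ) : ℝ) := by
  obtain ⟨i, j, hij, h | h | h | h⟩ := hx
  · exact ⟨i, j, 1, 1, hij.ne, by simp [h]⟩
  · exact ⟨i, j, 1, -1, hij.ne, by simp [h, sub_eq_add_neg, EuclideanSpace.single_neg_one]⟩
  · exact ⟨i, j, -1, 1, hij.ne, by simp [h, EuclideanSpace.single_neg_one]⟩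
  · exact ⟨i, j, -1, -1, hij.ne, by simp [h, sub_eq_add_neg, EuclideanSpace.single_neg_one]⟩

/-- The coordinates of a root of `D_n` are integers. -/
lemma IsRootDn.exists_int_apply {n : ℕ} {x : EuclideanSpace ℝ (Fin n)} (hx : IsRootDn n x)
    (k : Fin n) : ∃ m : ℤ, x k = m := by
  obtain ⟨i, j, s, t, -, rfl⟩ := hx.exists_eq
  refine ⟨(if k = i then (s : ℤ) else 0) + (if k = j then (t : ℤ) else 0), ?_⟩
  simp

/-- A coordinate in the support of a root of `D_n` may be taken as its first index. -/
lemma IsRootDn.exists_eq_of_apply_ne_zero {n : ℕ} {x : EuclideanSpace ℝ (Fin n)}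
    (hx : IsRootDn n x) {i : Fin n} (hi : x i ≠ 0) :
    ∃ (k : Fin n) (s t : ℤˣ), k ≠ i ∧
      x = EuclideanSpace.single i ((s : ℤ) : ℝ) + EuclideanSpace.single k ((t : ℤ) : ℝ) := by
  obtain ⟨a, b, s, t, hab, rfl⟩ := hx.exists_eq
  by_cases ha : i = a
  · subst ha
    exact ⟨b, s, t, hab.symm, rfl⟩
  · by_cases hb : i = b
    · subst hb
      exact ⟨a, t, s, hab, add_comm _ _⟩
    · simp [ha, hb] at hi

/-- The sum of two orthogonal roots of `D_n` with a common support coordinate lies in `2ℤ^n`, so it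
pairs evenly with every root. -/
lemma IsRootDn.exists_inner_add_eq_two_mul {n : ℕ} {u x y : EuclideanSpace ℝ (Fin n)}
    (hu : IsRootDn n u) (hx : IsRootDn n x) (hy : IsRootDn n y) {i : Fin n}
    (hxi : x i ≠ 0) (hyi : y i ≠ 0) (hxy : ⟪x, y⟫ = 0) :
    ∃ m : ℤ, ⟪u, x⟫ + ⟪u, y⟫ = 2 * (m : ℝ) := by
  obtain ⟨k, s, t, hk, rfl⟩ := hx.exists_eq_of_apply_ne_zero hxi
  obtain ⟨l, s', t', hl, rfl⟩ := hy.exists_eq_of_apply_ne_zero hyi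
  have hkl : k = l := by
    by_contra hkl
    simp [inner_add_left, EuclideanSpace.inner_single_left, hl.symm, hk, hkl] at hxy
  subst hkl
  obtain ⟨p, hp⟩ := hu.exists_int_apply i
  obtain ⟨q, hq⟩ := hu.exists_int_apply k
  have even_add (a b : ℤˣ) : Even ((a : ℤ) + b) := by
    rcases Int.units_eq_one_or a with rfl | rfl <;>
      rcases Int.units_eq_one_or b with rfl | rfl <;> decide
  obtain ⟨c, hc⟩ := even_add s s'
  obtain ⟨d, hd⟩ := even_add t t'
  have hc' : ((s : ℤ) : ℝ) + ((s' : ℤ) : ℝ) = c + c := by exact_mod_cast hc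
  have hd' : ((t : ℤ) : ℝ) + ((t' : ℤ) : ℝ) = d + d := by exact_mod_cast hd
  refine ⟨c * p + d * q, ?_⟩
  simp only [inner_add_right, EuclideanSpace.inner_single_right, hp, hq, conj_trivial]
  push_cast
  linear_combination (p : ℝ) * hc' + (q : ℝ) * hd'

/-- The Dynkin diagram `E₆` cannot be realised by roots of `D_n`: here `v` is the trivalent node,
with neighbours `x`, `y`, `z`, and `p`, `q` are the further neighbours of `y`, `z`. -/
lemma not_E6_of_isRootDn {n : ℕ} {v x y z p q : EuclideanSpace ℝ (Fin n)}
    (hv : IsRootDn n v) (hx : IsRootDn n x) (hy : IsRootDn n y) (hz : IsRootDn n z)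
    (hp : IsRootDn n p) (hq : IsRootDn n q)
    (hvx : ⟪v, x⟫ = -1) (hvy : ⟪v, y⟫ = -1) (hvz : ⟪v, z⟫ = -1)
    (hxy : ⟪x, y⟫ = 0) (hxz : ⟪x, z⟫ = 0) (hyz : ⟪y, z⟫ = 0)
    (hpx : ⟪p, x⟫ = 0) (hpy : ⟪p, y⟫ = -1) (hpz : ⟪p, z⟫ = 0)
    (hqx : ⟪q, x⟫ = 0) (hqz : ⟪q, z⟫ = -1) : False := by
  obtain ⟨i, j, s, t, -, rfl⟩ := hv.exists_eq
  have support {w : EuclideanSpace ℝ (Fin n)}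
      (hw : ⟪EuclideanSpace.single i ((s : ℤ) : ℝ) + EuclideanSpace.single j ((t : ℤ) : ℝ), w⟫
        = -1) : w i ≠ 0 ∨ w j ≠ 0 := by
    by_contra! h
    simp [inner_add_left, EuclideanSpace.inner_single_left, h.1, h.2] at hw
  have odd (m : ℤ) (hm : (-1 : ℝ) = 2 * (m : ℝ)) : False := by
    have : (-1 : ℤ) = 2 * m := by exact_mod_cast hm
    omega
  have not_xy {k : Fin n} (h₁ : x k ≠ 0) (h₂ : y k ≠ 0) : False := by
    obtain ⟨m, hm⟩ := hp.exists_inner_add_eq_two_mul hx hy h₁ h₂ hxy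
    exact odd m (by rw [← hm, hpx, hpy]; norm_num)
  have not_xz {k : Fin n} (h₁ : x k ≠ 0) (h₂ : z k ≠ 0) : False := by
    obtain ⟨m, hm⟩ := hq.exists_inner_add_eq_two_mul hx hz h₁ h₂ hxz
    exact odd m (by rw [← hm, hqx, hqz]; norm_num)
  have not_yz {k : Fin n} (h₁ : y k ≠ 0) (h₂ : z k ≠ 0) : False := by
    obtain ⟨m, hm⟩ := hp.exists_inner_add_eq_two_mul hy hz h₁ h₂ hyz
    exact odd m (by rw [← hm, hpy, hpz]; norm_num)
  rcases support hvx with h₁ | h₁ <;> rcases support hvy with h₂ | h₂ <;>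
    rcases support hvz with h₃ | h₃ <;>
    first
    | exact not_xy h₁ h₂
    | exact not_xz h₁ h₃
    | exact not_yz h₂ h₃

/-- The root systems `E₇` and `E₈` are not contained in the root system `D_n`. -/
theorem E7_E8_not_subset_Dn (n : ℕ) (hn : 1 ≤ n) :
    (¬ ∃ β : Fin 7 → EuclideanSpace ℝ (Fin n),
      (∀ r, IsRootDn n (β r)) ∧ ∀ r s, ⟪β r, β s⟫ = cartanE7 r s) ∧
    (¬ ∃ β : Fin 8 → EuclideanSpace ℝ (Fin n),
      (∀ r, IsRootDn n (β r)) ∧ ∀ r s, ⟪β r, β s⟫ = cartanE8 r s) := by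
  constructor
  · rintro ⟨β, hβ, hG⟩
    refine not_E6_of_isRootDn (hβ 3) (hβ 1) (hβ 2) (hβ 4) (hβ 0) (hβ 5)
      ?_ ?_ ?_ ?_ ?_ ?_ ?_ ?_ ?_ ?_ ?_ <;> simp [hG, cartanE7]
  · rintro ⟨β, hβ, hG⟩
    refine not_E6_of_isRootDn (hβ 3) (hβ 1) (hβ 2) (hβ 4) (hβ 0) (hβ 5)
      ?_ ?_ ?_ ?_ ?_ ?_ ?_ ?_ ?_ ?_ ?_ <;> simp [hG, cartanE8]
end

section
/- For every l ≥ 4 and every k with 1 ≤ k ≤ l − 3, the determinant of the partial Cartan matrix B(l, k) of the Carter diagram D_l(a_k) equals 4. -/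
/-- The partial Cartan matrix `B(l, k)` of the Carter diagram `D_l(a_k)`
(`l ≥ 4`, `1 ≤ k ≤ l - 3`).  The `l` vertices are numbered as follows:
`c₁ = 0`, `c₂ = 1`, `c₃ = 2`, `c₄ = 3`; `pᵢ = 3 + i` for `1 ≤ i ≤ k - 1`;
`qⱼ = k + 2 + j` for `1 ≤ j ≤ l - k - 3`.  The diagonal entries are `2`;
the quadrangle `c₁ c₂ c₃ c₄` has solid edges `c₁c₂`, `c₂c₃`, `c₃c₄` (entry `-1`)
and the dotted edge `c₁c₄` (entry `+1`); a chain of solid edges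
`c₂ – p₁ – ⋯ – p_{k-1}` is attached to `c₂`, and a chain of solid edges
`c₄ – q₁ – ⋯ – q_{l-k-3}` is attached to `c₄`; all other entries vanish. -/
def carterDlak (l k : ℕ) : Matrix (Fin l) (Fin l) ℤ := fun i j =>
  let a := min (i : ℕ) (j : ℕ)
  let b := max (i : ℕ) (j : ℕ)
  if a = b then 2
  else if a = 0 ∧ b = 3 then 1
  else if (a = 0 ∧ b = 1) ∨ (a = 1 ∧ b = 2) ∨ (a = 2 ∧ b = 3) then -1
  else if a = 1 ∧ b = 4 ∧ 2 ≤ k then -1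
  else if 4 ≤ a ∧ b = a + 1 ∧ b ≤ k + 2 then -1
  else if a = 3 ∧ b = k + 3 then -1
  else if k + 3 ≤ a ∧ b = a + 1 then -1
  else 0

/-- The vertex preceding `i` in the realization of `D_l(a_k)` by the vectors `e i ± e (prev i)`;
the vertices `c₁ = 0` and `c₃ = 2` precede each other. -/
def carterPrev (k i : ℕ) : ℕ :=
  if i = 0 then 2 else if i = 1 then 0 else if i = 2 then 0 else if i = 3 then 2
  else if i = k + 3 then 3 else if i = 4 then 1 else i - 1

theorem carterPrev_lt_self {k i : ℕ} (hi : i ≠ 0) : carterPrev k i < i := by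
  unfold carterPrev
  split_ifs <;> omega

theorem carterPrev_lt {l k i : ℕ} (hl : 4 ≤ l) (hi : i < l) : carterPrev k i < l := by
  rcases eq_or_ne i 0 with rfl | h
  · simp only [carterPrev, if_true]
    omega
  · exact (carterPrev_lt_self h).trans hi

/-- The matrix whose rows are the vectors `e i ± e (prev i)` of the root system `D_l`,
with sign `+` only for `i = 2`. -/
def carterRoots (l k : ℕ) (hl : 4 ≤ l) : Matrix (Fin l) (Fin l) ℤ := fun i =>
  Pi.single i 1 +
    (if (i : ℕ) = 2 then 1 else -1 : ℤ) • Pi.single ⟨carterPrev k i, carterPrev_lt hl i.2⟩ 1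

theorem carterRoots_apply (l k : ℕ) (hl : 4 ≤ l) (i j : Fin l) :
    carterRoots l k hl i j = (if (j : ℕ) = i then 1 else 0) +
      (if (i : ℕ) = 2 then 1 else -1) * (if (j : ℕ) = carterPrev k i then 1 else 0) := by
  simp only [carterRoots, Pi.add_apply, Pi.smul_apply, Pi.single_apply, Fin.ext_iff, smul_eq_mul]

theorem carterRoots_mul_transpose (l k : ℕ) (hl : 4 ≤ l) (hk : 1 ≤ k) :
    carterRoots l k hl * (carterRoots l k hl).transpose = carterDlak l k := by
  ext i j
  change carterRoots l k hl i ⬝ᵥ carterRoots l k hl j = _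
  simp only [carterRoots, add_dotProduct, dotProduct_add, smul_dotProduct, dotProduct_smul,
    single_one_dotProduct, Pi.single_apply, Fin.ext_iff, smul_eq_mul]
  obtain ⟨i, hi⟩ := i
  obtain ⟨j, hj⟩ := j
  simp only [carterDlak]
  wlog hij : i ≤ j generalizing i j
  · have := this j hj i hi (by omega)
    rw [min_comm, max_comm, ← this]
    simp only [eq_comm (a := i), eq_comm (a := carterPrev k i)]
    ring
  rw [min_eq_left hij, max_eq_right hij]
  unfold carterPrev
  grind (splits := 40)

theorem det_carterRoots (l k : ℕ) (hl : 4 ≤ l) : (carterRoots l k hl).det = 2 := by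
  have h02 : (⟨0, by omega⟩ : Fin l) ≠ ⟨2, by omega⟩ := by simp
  rw [← Matrix.det_updateRow_add_self (carterRoots l k hl) h02, Matrix.det_of_isLowerTriangular]
  · rw [Finset.prod_eq_single (⟨0, by omega⟩ : Fin l)]
    · simp [carterRoots_apply, carterPrev]
    · intro i _ hi
      have hi' : (i : ℕ) ≠ 0 := fun h => hi (Fin.ext h)
      have := carterPrev_lt_self (k := k) hi'
      simp [carterRoots_apply, Matrix.updateRow_ne hi, this.ne']
    · simp
  · intro i j hij
    have hij : (i : ℕ) < j := hij
    by_cases hi : i = ⟨0, by omega⟩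
    · have hj : (j : ℕ) ≠ 0 := by omega
      simp [hi, carterRoots_apply, carterPrev, hj]
      split_ifs <;> rfl
    · have hi' : (i : ℕ) ≠ 0 := fun h => hi (Fin.ext h)
      have := carterPrev_lt_self (k := k) hi'
      simp [carterRoots_apply, Matrix.updateRow_ne hi, hij.ne', (this.trans hij).ne']

/-- The determinant of the partial Cartan matrix of the Carter diagram `D_l(a_k)`
equals `4` for all `l ≥ 4` and `1 ≤ k ≤ l - 3`. -/
theorem det_carterDlak (l k : ℕ) (hl : 4 ≤ l) (hk1 : 1 ≤ k) (hk2 : k ≤ l - 3) :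
    (carterDlak l k).det = 4 := by
  rw [← carterRoots_mul_transpose l k hl hk1, Matrix.det_mul, Matrix.det_transpose,
    det_carterRoots]
  norm_num
end

section
/- Let l ≥ 4, 1 ≤ k ≤ l − 3, and let B = B(l, k) be the partial Cartan matrix of the Carter diagram D_l(a_k), regarded as a matrix over ℚ. Then B is invertible and the diagonal entries of B^{−1} are: (B^{−1})[c_1,c_1] = (B^{−1})[c_3,c_3] = l/4; (B^{−1})[c_2,c_2] = k; (B^{−1})[c_4,c_4] = l − k − 2; (B^{−1})[p_i,p_i] = k − i for 1 ≤ i ≤ k−1; and (B^{−1})[q_j,q_j] = l − k − 2 − j for 1 ≤ j ≤ l−k−3. -/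
/-- The partial Cartan matrix `B(l, k)` of the Carter diagram `D_l(a_k)` over `ℚ`
(`l ≥ 4`, `1 ≤ k ≤ l - 3`).  The `l` vertices are numbered as follows:
`c₁ = 0`, `c₂ = 1`, `c₃ = 2`, `c₄ = 3`; `pᵢ = 3 + i` for `1 ≤ i ≤ k - 1`;
`qⱼ = k + 2 + j` for `1 ≤ j ≤ l - k - 3`.  The diagonal entries are `2`;
the quadrangle `c₁ c₂ c₃ c₄` has solid edges `c₁c₂`, `c₂c₃`, `c₃c₄` (entry `-1`)
and the dotted edge `c₁c₄` (entry `+1`); a chain of solid edges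
`c₂ – p₁ – ⋯ – p_{k-1}` is attached to `c₂`, and a chain of solid edges
`c₄ – q₁ – ⋯ – q_{l-k-3}` is attached to `c₄`; all other entries vanish. -/
def carterDlakQ (l k : ℕ) : Matrix (Fin l) (Fin l) ℚ := fun i j =>
  let a := min (i : ℕ) (j : ℕ)
  let b := max (i : ℕ) (j : ℕ)
  if a = b then 2
  else if a = 0 ∧ b = 3 then 1
  else if (a = 0 ∧ b = 1) ∨ (a = 1 ∧ b = 2) ∨ (a = 2 ∧ b = 3) then -1
  else if a = 1 ∧ b = 4 ∧ 2 ≤ k then -1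
  else if 4 ≤ a ∧ b = a + 1 ∧ b ≤ k + 2 then -1
  else if a = 3 ∧ b = k + 3 then -1
  else if k + 3 ≤ a ∧ b = a + 1 then -1
  else 0

/-- The distance of a vertex to the free end of the chain `c₂, p₁, …, p_{k-1}`, counted so that
`c₂` has height `k`; the vertices `c₁`, `c₃` are given the height of their neighbour `c₂`. -/
def pHeight (k n : ℕ) : ℕ := if n ≤ 2 then k else if n = 3 then 0 else k + 3 - n

/-- The distance of a vertex to the free end of the chain `c₄, q₁, …, q_{l-k-3}`, counted so that
`c₄` has height `l - k - 2`; the vertices `c₁`, `c₃` are given the height of `c₄`. -/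
def qHeight (l k n : ℕ) : ℕ :=
  if n = 1 then 0 else if n ≤ 3 then l - k - 2 else if n ≤ k + 2 then 0 else l - n

/-- The weight of a vertex with respect to the chain attached to `c₂`. -/
def pWeight (n : ℕ) : ℚ := if n = 0 ∨ n = 2 then 1 / 2 else 1

/-- The weight of a vertex with respect to the chain attached to `c₄`. -/
def qWeight (n : ℕ) : ℚ := if n = 0 then -1 / 2 else if n = 2 then 1 / 2 else 1

/-- The entries of the inverse of `carterDlakQ l k`. -/
def carterInvEntry (l k i j : ℕ) : ℚ :=
  pWeight i * pWeight j * (min (pHeight k i) (pHeight k j) : ℕ)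
    + qWeight i * qWeight j * (min (qHeight l k i) (qHeight l k j) : ℕ)
    + if i = j ∧ (i = 0 ∨ i = 2) then 1 / 2 else 0

/-- The neighbour of a chain vertex on the side of the quadrangle. -/
def chainPred (k n : ℕ) : ℕ := if n = 4 ∧ 2 ≤ k then 1 else if n = k + 3 then 3 else n - 1

/-- The action of a row of `carterDlakQ l k` on a vector. -/
def carterRow (l k : ℕ) (f : ℕ → ℚ) (i : ℕ) : ℚ :=
  if i = 0 then 2 * f 0 - f 1 + f 3
  else if i = 1 then 2 * f 1 - f 0 - f 2 - (if 2 ≤ k then f 4 else 0)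
  else if i = 2 then 2 * f 2 - f 1 - f 3
  else if i = 3 then 2 * f 3 + f 0 - f 2 - (if k + 3 < l then f (k + 3) else 0)
  else 2 * f i - f (chainPred k i) - (if i + 1 < l ∧ i ≠ k + 2 then f (i + 1) else 0)

theorem Fin.sum_eq_of_support_four (l : ℕ) (f : ℕ → ℚ) (g : Fin l → ℚ) (a b c d : ℕ)
    (x y z w : ℚ) (h : ∀ j : Fin l, g j =
      (if (j : ℕ) = a then x else 0) + (if (j : ℕ) = b then y else 0)
        + (if (j : ℕ) = c then z else 0) + (if (j : ℕ) = d then w else 0)) :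
    ∑ j : Fin l, g j * f j =
      (if a < l then x * f a else 0) + (if b < l then y * f b else 0)
        + (if c < l then z * f c else 0) + (if d < l then w * f d else 0) := by
  simp only [h, add_mul, ite_mul, zero_mul]
  rw [Fin.sum_univ_eq_sum_range (fun j : ℕ =>
    (if j = a then x * f j else 0) + (if j = b then y * f j else 0)
      + (if j = c then z * f j else 0) + (if j = d then w * f j else 0)) l]
  simp [Finset.sum_add_distrib]

set_option maxHeartbeats 800000 in
theorem carterDlakQ_apply_of_four_le (l k : ℕ) (hk1 : 1 ≤ k) (i : Fin l) (hi : 4 ≤ (i : ℕ))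
    (j : Fin l) : carterDlakQ l k i j =
      if (j : ℕ) = i then 2
      else if (j : ℕ) = chainPred k i ∨ (j : ℕ) = i + 1 ∧ (i : ℕ) ≠ k + 2 then -1 else 0 := by
  have hpred : ((i : ℕ) = 4 ∧ 2 ≤ k ∧ chainPred k i = 1) ∨ ((i : ℕ) = k + 3 ∧ chainPred k i = 3) ∨
      ((i : ℕ) ≠ 4 ∧ (i : ℕ) ≠ k + 3 ∧ chainPred k i = i - 1) := by
    grind [chainPred]
  generalize chainPred k i = p at hpred
  simp only [carterDlakQ]
  split_ifs <;> first | omega | rfl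

theorem sum_carterDlakQ_mul (l k : ℕ) (hk1 : 1 ≤ k) (hk2 : k + 3 ≤ l) (f : ℕ → ℚ) (i : Fin l) :
    ∑ j : Fin l, carterDlakQ l k i j * f j = carterRow l k f i := by
  obtain ⟨i, hi⟩ := i
  unfold carterRow
  rcases (by omega : i = 0 ∨ i = 1 ∨ i = 2 ∨ i = 3 ∨ 4 ≤ i) with rfl | rfl | rfl | rfl | h4
  · rw [Fin.sum_eq_of_support_four l f _ 0 1 3 0 2 (-1) 1 0
      (by intro ⟨j, hj⟩; simp only [carterDlakQ, min_def, max_def]; grind)]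
    grind
  · rw [Fin.sum_eq_of_support_four l f _ 1 0 2 4 2 (-1) (-1) (if 2 ≤ k then -1 else 0)
      (by intro ⟨j, hj⟩; simp only [carterDlakQ, min_def, max_def]; grind)]
    grind
  · rw [Fin.sum_eq_of_support_four l f _ 2 1 3 0 2 (-1) (-1) 0
      (by intro ⟨j, hj⟩; simp only [carterDlakQ, min_def, max_def]; grind)]
    grind
  · rw [Fin.sum_eq_of_support_four l f _ 3 0 2 (k + 3) 2 1 (-1) (-1)
      (by intro ⟨j, hj⟩; simp only [carterDlakQ, min_def, max_def]; grind)]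
    grind
  · have hp1 : chainPred k i < i := by grind [chainPred]
    have hentry := carterDlakQ_apply_of_four_le l k hk1 ⟨i, hi⟩ h4
    generalize chainPred k i = p at hp1 hentry
    rw [Fin.sum_eq_of_support_four l f _ i p (i + 1) 0 2 (-1) (if i = k + 2 then 0 else -1) 0
        (by intro j; rw [hentry]; grind),
      if_neg (by omega : i ≠ 0), if_neg (by omega : i ≠ 1), if_neg (by omega : i ≠ 2),
      if_neg (by omega : i ≠ 3), if_pos hi, if_pos (by omega : p < l)]
    grind

theorem cast_min_succ_left (a b : ℕ) :
    ((min (a + 1) b : ℕ) : ℚ) = (min a b : ℕ) + if a + 1 ≤ b then 1 else 0 := by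
  split_ifs with h
  · rw [min_eq_left h, min_eq_left (by omega)]
    push_cast
    ring
  · rw [min_eq_right (by omega), min_eq_right (by omega), add_zero]

theorem carterInvEntry_zero_left (l k j : ℕ) : carterInvEntry l k 0 j =
    1 / 2 * pWeight j * (min k (pHeight k j) : ℕ)
      - 1 / 2 * qWeight j * (min (l - k - 2) (qHeight l k j) : ℕ)
      + if j = 0 then 1 / 2 else 0 := by
  rw [carterInvEntry, show pWeight 0 = 1 / 2 by simp [pWeight],
    show qWeight 0 = -1 / 2 by simp [qWeight], show pHeight k 0 = k by simp [pHeight],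
    show qHeight l k 0 = l - k - 2 by simp [qHeight]]
  grind

theorem carterInvEntry_two_left (l k j : ℕ) : carterInvEntry l k 2 j =
    1 / 2 * pWeight j * (min k (pHeight k j) : ℕ)
      + 1 / 2 * qWeight j * (min (l - k - 2) (qHeight l k j) : ℕ)
      + if j = 2 then 1 / 2 else 0 := by
  rw [carterInvEntry, show pWeight 2 = 1 / 2 by simp [pWeight],
    show qWeight 2 = 1 / 2 by simp [qWeight], show pHeight k 2 = k by simp [pHeight],
    show qHeight l k 2 = l - k - 2 by simp [qHeight]]
  grind

theorem carterInvEntry_left_of_p (l k n j : ℕ) (hn : n = 1 ∨ 4 ≤ n ∧ n ≤ k + 2) :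
    carterInvEntry l k n j = pWeight j * (min (pHeight k n) (pHeight k j) : ℕ) := by
  have hq : qHeight l k n = 0 := by grind [qHeight]
  have hw : pWeight n = 1 := by grind [pWeight]
  rw [carterInvEntry, hq, hw, if_neg (by omega)]
  simp

theorem carterInvEntry_left_of_q (l k n j : ℕ) (hk1 : 1 ≤ k) (hn : n = 3 ∨ k + 3 ≤ n) :
    carterInvEntry l k n j = qWeight j * (min (qHeight l k n) (qHeight l k j) : ℕ) := by
  have hp : pHeight k n = 0 := by grind [pHeight]
  have hw : qWeight n = 1 := by grind [qWeight]
  rw [carterInvEntry, hp, hw, if_neg (by omega)]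
  simp

theorem carterRow_carterInvEntry (l k : ℕ) (hk1 : 1 ≤ k) (hk2 : k + 3 ≤ l) (i j : ℕ)
    (hi : i < l) (hj : j < l) :
    carterRow l k (fun n => carterInvEntry l k n j) i = if i = j then 1 else 0 := by
  have h1 : carterInvEntry l k 1 j = pWeight j * (min k (pHeight k j) : ℕ) :=
    carterInvEntry_left_of_p l k 1 j (by omega)
  have h3 : carterInvEntry l k 3 j = qWeight j * (min (l - k - 2) (qHeight l k j) : ℕ) :=
    carterInvEntry_left_of_q l k 3 j hk1 (by omega)
  unfold carterRow
  rcases (by omega : i = 0 ∨ i = 1 ∨ i = 2 ∨ i = 3 ∨ (4 ≤ i ∧ i ≤ k + 2) ∨ k + 3 ≤ i)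
    with rfl | rfl | rfl | rfl | h4 | h4
  · simp only [carterInvEntry_zero_left, h1, h3]
    grind
  · have hnext : (if 2 ≤ k then carterInvEntry l k 4 j else 0) =
        pWeight j * (min (k - 1) (pHeight k j) : ℕ) := by
      split_ifs with h
      · exact carterInvEntry_left_of_p l k 4 j (by omega)
      · simp [show k - 1 = 0 by omega]
    have hmin := cast_min_succ_left (k - 1) (pHeight k j)
    rw [Nat.sub_add_cancel hk1] at hmin
    simp only [carterInvEntry_zero_left, carterInvEntry_two_left, h1, hnext, hmin]
    grind [pHeight, pWeight]
  · simp only [carterInvEntry_two_left, h1, h3]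
    grind
  · have hnext : (if k + 3 < l then carterInvEntry l k (k + 3) j else 0) =
        qWeight j * (min (l - k - 3) (qHeight l k j) : ℕ) := by
      split_ifs with h
      · rw [carterInvEntry_left_of_q l k (k + 3) j hk1 (by omega),
          show qHeight l k (k + 3) = l - k - 3 by grind [qHeight]]
      · simp [show l - k - 3 = 0 by omega]
    have hmin := cast_min_succ_left (l - k - 3) (qHeight l k j)
    rw [show l - k - 3 + 1 = l - k - 2 by omega] at hmin
    simp only [carterInvEntry_zero_left, carterInvEntry_two_left, h3, hnext, hmin]
    grind [qHeight, qWeight]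
  · obtain ⟨a, ha⟩ : ∃ a, k + 2 = i + a := ⟨k + 2 - i, by omega⟩
    have hself : carterInvEntry l k i j = pWeight j * (min (a + 1) (pHeight k j) : ℕ) := by
      rw [carterInvEntry_left_of_p l k i j (by omega),
        show pHeight k i = a + 1 by grind [pHeight]]
    have hpred : carterInvEntry l k (chainPred k i) j =
        pWeight j * (min (a + 1 + 1) (pHeight k j) : ℕ) := by
      rw [carterInvEntry_left_of_p l k _ j (by grind [chainPred]),
        show pHeight k (chainPred k i) = a + 1 + 1 by grind [pHeight, chainPred]]
    have hnext : (if i + 1 < l ∧ i ≠ k + 2 then carterInvEntry l k (i + 1) j else 0) =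
        pWeight j * (min a (pHeight k j) : ℕ) := by
      split_ifs with h
      · rw [carterInvEntry_left_of_p l k _ j (by omega),
          show pHeight k (i + 1) = a by grind [pHeight]]
      · simp [show a = 0 by omega]
    have hheight : pHeight k j = a + 1 ↔ i = j := by grind [pHeight]
    have hweight : i = j → pWeight j = 1 := by grind [pWeight]
    rw [if_neg (by omega), if_neg (by omega), if_neg (by omega), if_neg (by omega)]
    simp only [hself, hpred, hnext, cast_min_succ_left]
    grind
  · obtain ⟨a, ha⟩ : ∃ a, l = i + a + 1 := ⟨l - i - 1, by omega⟩
    have hself : carterInvEntry l k i j = qWeight j * (min (a + 1) (qHeight l k j) : ℕ) := by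
      rw [carterInvEntry_left_of_q l k i j hk1 (by omega),
        show qHeight l k i = a + 1 by grind [qHeight]]
    have hpred : carterInvEntry l k (chainPred k i) j =
        qWeight j * (min (a + 1 + 1) (qHeight l k j) : ℕ) := by
      rw [carterInvEntry_left_of_q l k _ j hk1 (by grind [chainPred]),
        show qHeight l k (chainPred k i) = a + 1 + 1 by grind [qHeight, chainPred]]
    have hnext : (if i + 1 < l ∧ i ≠ k + 2 then carterInvEntry l k (i + 1) j else 0) =
        qWeight j * (min a (qHeight l k j) : ℕ) := by
      split_ifs with h
      · rw [carterInvEntry_left_of_q l k _ j hk1 (by omega),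
          show qHeight l k (i + 1) = a by grind [qHeight]]
      · simp [show a = 0 by omega]
    have hheight : qHeight l k j = a + 1 ↔ i = j := by grind [qHeight]
    have hweight : i = j → qWeight j = 1 := by grind [qWeight]
    rw [if_neg (by omega), if_neg (by omega), if_neg (by omega), if_neg (by omega)]
    simp only [hself, hpred, hnext, cast_min_succ_left]
    grind

theorem carterDlakQ_mul_inv (l k : ℕ) (hk1 : 1 ≤ k) (hk2 : k + 3 ≤ l) :
    carterDlakQ l k * Matrix.of (fun i j : Fin l => carterInvEntry l k i j) = 1 := by
  ext i j
  rw [Matrix.mul_apply, Matrix.one_apply]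
  simp only [Matrix.of_apply, Fin.ext_iff]
  rw [sum_carterDlakQ_mul l k hk1 hk2 (fun n => carterInvEntry l k n j),
    carterRow_carterInvEntry l k hk1 hk2 i j i.2 j.2]

/-- The partial Cartan matrix of `D_l(a_k)` is invertible over `ℚ`, and the diagonal
entries of its inverse are: `l/4` at `c₁` and `c₃`; `k` at `c₂`; `l - k - 2` at `c₄`;
`k - i` at `pᵢ` (`1 ≤ i ≤ k - 1`); and `l - k - 2 - j` at `qⱼ` (`1 ≤ j ≤ l - k - 3`). -/
theorem inv_carterDlak_diag (l k : ℕ) (hl : 4 ≤ l) (hk1 : 1 ≤ k) (hk2 : k ≤ l - 3) :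
    IsUnit (carterDlakQ l k).det ∧
    (carterDlakQ l k)⁻¹ ⟨0, by omega⟩ ⟨0, by omega⟩ = (l : ℚ) / 4 ∧
    (carterDlakQ l k)⁻¹ ⟨2, by omega⟩ ⟨2, by omega⟩ = (l : ℚ) / 4 ∧
    (carterDlakQ l k)⁻¹ ⟨1, by omega⟩ ⟨1, by omega⟩ = (k : ℚ) ∧
    (carterDlakQ l k)⁻¹ ⟨3, by omega⟩ ⟨3, by omega⟩ = (l : ℚ) - (k : ℚ) - 2 ∧
    (∀ (i : ℕ) (hi1 : 1 ≤ i) (hi2 : i ≤ k - 1),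
      (carterDlakQ l k)⁻¹ ⟨3 + i, by omega⟩ ⟨3 + i, by omega⟩ = (k : ℚ) - (i : ℚ)) ∧
    (∀ (j : ℕ) (hj1 : 1 ≤ j) (hj2 : j ≤ l - k - 3),
      (carterDlakQ l k)⁻¹ ⟨k + 2 + j, by omega⟩ ⟨k + 2 + j, by omega⟩
        = (l : ℚ) - (k : ℚ) - 2 - (j : ℚ)) := by
  have hmul := carterDlakQ_mul_inv l k hk1 (by omega)
  have hcast : ((l - k - 2 : ℕ) : ℚ) = (l : ℚ) - k - 2 := by
    rw [Nat.cast_sub (by omega), Nat.cast_sub (by omega), Nat.cast_ofNat]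
  rw [Matrix.inv_eq_right_inv hmul]
  refine ⟨Matrix.isUnit_det_of_right_inverse hmul, ?_, ?_, ?_, ?_, fun i _ hi2 => ?_,
    fun j hj1 hj2 => ?_⟩
  · simp [carterInvEntry, pHeight, qHeight, pWeight, qWeight, hcast]
    ring
  · simp [carterInvEntry, pHeight, qHeight, pWeight, qWeight, hcast]
    ring
  · simp [carterInvEntry, pHeight, qHeight, pWeight, qWeight]
  · simp [carterInvEntry, pHeight, qHeight, pWeight, qWeight, hcast]
  · have hp : pHeight k (3 + i) = k - i := by grind [pHeight]
    have hq : qHeight l k (3 + i) = 0 := by grind [qHeight]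
    have hw : pWeight (3 + i) = 1 := by grind [pWeight]
    simp only [Matrix.of_apply, carterInvEntry, hp, hq, hw, min_self]
    rw [Nat.cast_sub (by omega), if_neg (by omega)]
    simp
  · have hp : pHeight k (k + 2 + j) = 0 := by grind [pHeight]
    have hq : qHeight l k (k + 2 + j) = l - k - 2 - j := by grind [qHeight]
    have hw : qWeight (k + 2 + j) = 1 := by grind [qWeight]
    simp only [Matrix.of_apply, carterInvEntry, hp, hq, hw, min_self]
    rw [Nat.cast_sub (by omega), hcast, if_neg (by omega)]
    simp
end

section
/- In ℝ^6, let C_1 = {e_1+e_2, e_4−e_1, e_1−e_2, e_2−e_3} and C_2 = {e_1+e_2, e_4−e_1, e_3−e_4, e_2−e_3}. Then no element T of the group of linear maps generated by the reflections s_v for v ∈ Φ(D_6) maps the set C_1 onto the set C_2. In particular, the root subsets C_1 and C_2 are non-conjugate under the Weyl group W(D_6), even though both realize the Carter diagram D_4(a_1) and their associated Weyl group elements are conjugate. -/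
open RealInnerProductSpace

/-- The reflection in the hyperplane orthogonal to `v` in `ℝ⁶`:
`x ↦ x - (2⟪x, v⟫ / ⟪v, v⟫) • v`. -/
noncomputable def reflD6 (v : EuclideanSpace ℝ (Fin 6)) :
    EuclideanSpace ℝ (Fin 6) → EuclideanSpace ℝ (Fin 6) :=
  fun x => x - ((2 * ⟪x, v⟫ / ⟪v, v⟫ : ℝ)) • v

/-- The standard basis vector `e_i` of `ℝ⁶` (here `i` runs over `0, …, 5`,
corresponding to `e_1, …, e_6`). -/
noncomputable def ee (i : Fin 6) : EuclideanSpace ℝ (Fin 6) :=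
  EuclideanSpace.single i (1 : ℝ)

/-- The root system `D₆`: the vectors `±e_i ± e_j` with `i < j` in `ℝ⁶`. -/
def PhiD6 : Set (EuclideanSpace ℝ (Fin 6)) :=
  {x | ∃ i j : Fin 6, i < j ∧
    (x = EuclideanSpace.single i (1 : ℝ) + EuclideanSpace.single j (1 : ℝ) ∨
     x = EuclideanSpace.single i (1 : ℝ) - EuclideanSpace.single j (1 : ℝ) ∨
     x = -EuclideanSpace.single i (1 : ℝ) + EuclideanSpace.single j (1 : ℝ) ∨
     x = -EuclideanSpace.single i (1 : ℝ) - EuclideanSpace.single j (1 : ℝ))}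

/-- `C₁ = {e₁+e₂, e₄−e₁, e₁−e₂, e₂−e₃}`. -/
noncomputable def Cone : Set (EuclideanSpace ℝ (Fin 6)) :=
  {ee 0 + ee 1, ee 3 - ee 0, ee 0 - ee 1, ee 1 - ee 2}

/-- `C₂ = {e₁+e₂, e₄−e₁, e₃−e₄, e₂−e₃}`. -/
noncomputable def Ctwo : Set (EuclideanSpace ℝ (Fin 6)) :=
  {ee 0 + ee 1, ee 3 - ee 0, ee 2 - ee 3, ee 1 - ee 2}

/-- A self-map of `ℝ⁶` that permutes the coordinates up to signs. -/
def IsSignedPerm (T : EuclideanSpace ℝ (Fin 6) → EuclideanSpace ℝ (Fin 6)) : Prop :=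
  ∃ (σ : Equiv.Perm (Fin 6)) (ε : Fin 6 → ℤˣ), ∀ x k, T x k = ((ε k : ℤ) : ℝ) * x (σ k)

theorem IsSignedPerm.comp {S T : EuclideanSpace ℝ (Fin 6) → EuclideanSpace ℝ (Fin 6)}
    (hS : IsSignedPerm S) (hT : IsSignedPerm T) : IsSignedPerm (S ∘ T) := by
  obtain ⟨σ, ε, hS⟩ := hS
  obtain ⟨τ, δ, hT⟩ := hT
  refine ⟨σ.trans τ, fun k => ε k * δ (σ k), fun x k => ?_⟩
  simp [hS, hT, mul_assoc]

theorem exists_units_of_mem_PhiD6 {v : EuclideanSpace ℝ (Fin 6)} (hv : v ∈ PhiD6) :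
    ∃ (i j : Fin 6) (a b : ℤˣ), i ≠ j ∧
      v = ((a : ℤ) : ℝ) • EuclideanSpace.single i (1 : ℝ) +
        ((b : ℤ) : ℝ) • EuclideanSpace.single j (1 : ℝ) := by
  obtain ⟨i, j, hij, rfl | rfl | rfl | rfl⟩ := hv
  · exact ⟨i, j, 1, 1, hij.ne, by simp⟩
  · exact ⟨i, j, 1, -1, hij.ne, by simp [sub_eq_add_neg]⟩
  · exact ⟨i, j, -1, 1, hij.ne, by simp⟩
  · exact ⟨i, j, -1, -1, hij.ne, by simp [sub_eq_add_neg]⟩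

theorem isSignedPerm_reflD6 {v : EuclideanSpace ℝ (Fin 6)} (hv : v ∈ PhiD6) :
    IsSignedPerm (reflD6 v) := by
  obtain ⟨i, j, a, b, hij, rfl⟩ := exists_units_of_mem_PhiD6 hv
  refine ⟨Equiv.swap i j, fun k => if k = i ∨ k = j then -(a * b) else 1, fun x k => ?_⟩
  have ha : ((a : ℤ) : ℝ) * ((a : ℤ) : ℝ) = 1 := by
    rcases Int.units_eq_one_or a with rfl | rfl <;> simp
  have hb : ((b : ℤ) : ℝ) * ((b : ℤ) : ℝ) = 1 := by
    rcases Int.units_eq_one_or b with rfl | rfl <;> simp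
  simp only [reflD6, inner_add_right, real_inner_smul_right,
    EuclideanSpace.inner_single_right,
    PiLp.sub_apply, PiLp.add_apply, PiLp.smul_apply, PiLp.single_apply, smul_eq_mul]
  by_cases hi : k = i
  · subst hi
    simp [hij, hij.symm, ha, hb]
    linear_combination (-x k) * ha
  by_cases hj : k = j
  · subst hj
    simp [hij, hij.symm, ha, hb]
    linear_combination (-x k) * hb
  · simp [hi, hj, Equiv.swap_apply_of_ne_of_ne hi hj]

theorem isSignedPerm_of_mem_closure {T : Function.End (EuclideanSpace ℝ (Fin 6))}
    (hT : T ∈ Submonoid.closure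
      {g : Function.End (EuclideanSpace ℝ (Fin 6)) | ∃ v ∈ PhiD6, g = reflD6 v}) :
    IsSignedPerm T := by
  induction hT using Submonoid.closure_induction with
  | mem g hg =>
    obtain ⟨v, hv, rfl⟩ := hg
    exact isSignedPerm_reflD6 hv
  | one => exact ⟨1, 1, fun x k => by simp [Function.End.one_def]⟩
  | mul S T _ _ hS hT => exact hS.comp hT

/-- Signed permutations preserve the lattice `2ℤ⁶`, which contains
`(e₁ + e₂) + (e₁ - e₂)`. -/
theorem IsSignedPerm.exists_even_add {T : EuclideanSpace ℝ (Fin 6) → EuclideanSpace ℝ (Fin 6)}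
    (hT : IsSignedPerm T) (k : Fin 6) :
    ∃ n : ℤ, T (ee 0 + ee 1) k + T (ee 0 - ee 1) k = ((2 * n : ℤ) : ℝ) := by
  obtain ⟨σ, ε, hT⟩ := hT
  refine ⟨ε k * if σ k = 0 then 1 else 0, ?_⟩
  simp only [hT, ee, PiLp.sub_apply, PiLp.add_apply, PiLp.single_apply]
  push_cast
  ring

theorem IsSignedPerm.injective {T : EuclideanSpace ℝ (Fin 6) → EuclideanSpace ℝ (Fin 6)}
    (hT : IsSignedPerm T) : Function.Injective T := by
  obtain ⟨σ, ε, hT⟩ := hT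
  intro x y hxy
  ext k
  have h := congrArg (fun z : EuclideanSpace ℝ (Fin 6) => z (σ.symm k)) hxy
  simpa [hT] using h

/-- No two distinct elements of `C₂` have their sum in `2ℤ⁶`. -/
theorem eq_of_mem_Ctwo_of_even_add {x y : EuclideanSpace ℝ (Fin 6)} (hx : x ∈ Ctwo)
    (hy : y ∈ Ctwo) (h : ∀ k, ∃ n : ℤ, x k + y k = ((2 * n : ℤ) : ℝ)) : x = y := by
  have odd_one (n : ℤ) : (1 : ℝ) ≠ 2 * n := by
    intro h
    have : (1 : ℤ) = 2 * n := by exact_mod_cast h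
    omega
  have odd_neg_one (n : ℤ) : (-1 : ℝ) ≠ 2 * n := by
    intro h
    have : (-1 : ℤ) = 2 * n := by exact_mod_cast h
    omega
  obtain ⟨n₀, h₀⟩ := h 0
  obtain ⟨n₁, h₁⟩ := h 1
  obtain ⟨n₂, h₂⟩ := h 2
  obtain ⟨n₃, h₃⟩ := h 3
  rcases hx with rfl | rfl | rfl | rfl <;> rcases hy with rfl | rfl | rfl | rfl <;>
    first
    | rfl
    | (exfalso; simp [ee, odd_one, odd_neg_one] at h₀ h₁ h₂ h₃)

/-- No element of the Weyl group `W(D₆)` — the group of linear maps generated by the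
reflections `s_v` for `v ∈ Φ(D₆)`, which coincides with the monoid generated by
these involutive reflections inside `Function.End (ℝ⁶)` — maps the root subset `C₁`
onto the root subset `C₂`. -/
theorem C1_not_conjugate_C2 :
    ∀ T ∈ Submonoid.closure
        {g : Function.End (EuclideanSpace ℝ (Fin 6)) | ∃ v ∈ PhiD6, g = reflD6 v},
      T '' Cone ≠ Ctwo := by
  intro T hT h
  have hT := isSignedPerm_of_mem_closure hT
  have hadd : T (ee 0 + ee 1) ∈ Ctwo := h ▸ Set.mem_image_of_mem T (by simp [Cone])
  have hsub : T (ee 0 - ee 1) ∈ Ctwo := h ▸ Set.mem_image_of_mem T (by simp [Cone])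
  have heq := hT.injective (eq_of_mem_Ctwo_of_even_add hadd hsub hT.exists_even_add)
  have := congrArg (fun z : EuclideanSpace ℝ (Fin 6) => z 1) heq
  norm_num [ee] at this
end
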